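/- arXiv:math/0304413 — 3 statements merged into one kernel-verified Lean document; each statement's English description precedes it below -/
import Mathlib

section
/- Let G be a finite group and χ an irreducible faithful character of G with χ(1) > 1. If η(χ) is odd, then the order of G is even. -/
open scoped Classical BigOperators

/-- Inner product of class functions on a finite group. -/
noncomputable def charInner (G : Type) [Group G] [Fintype G] (φ ψ : G → ℂ) : ℂ :=
  (Fintype.card G : ℂ)⁻¹ * ∑ g : G, φ g * (starRingEnd ℂ) (ψ g)

/-- `χ` is the character of an irreducible complex representation of `G`. -/
def IsIrrChar (G : Type) [Group G] [Fintype G] (χ : G → ℂ) : Prop :=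
  ∃ V : FDRep ℂ G, CategoryTheory.Simple V ∧ V.character = χ

/-- The number of distinct non-principal irreducible constituents of `χ ⬝ conj χ`. -/
noncomputable def etaChar (G : Type) [Group G] [Fintype G] (χ : G → ℂ) : ℕ :=
  Set.ncard {α : G → ℂ | IsIrrChar G α ∧ α ≠ (fun _ => 1) ∧
    charInner G (fun g => χ g * (starRingEnd ℂ) (χ g)) α ≠ 0}

/-- Kernel of a character, as a set. -/
def charKer (G : Type) [Group G] (χ : G → ℂ) : Set G := {g | χ g = χ 1}

/-- Induced character from a subgroup. -/
noncomputable def indChar (K : Type) [Group K] [Fintype K] (H : Subgroup K) (φ : H → ℂ) :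
    K → ℂ := fun k =>
  (Nat.card H : ℂ)⁻¹ * ∑ x : K, if h : x⁻¹ * k * x ∈ H then φ ⟨x⁻¹ * k * x, h⟩ else 0


/-- Derived length of a group. -/
noncomputable def derivedLength (G : Type) [Group G] : ℕ :=
  sInf {n | derivedSeries G n = ⊥}

/-- A finite group is supersolvable if it has a chain of normal subgroups of `G`
from `⊥` to `⊤` with cyclic factors. -/
def IsSupersolvableGroup (G : Type) [Group G] : Prop :=
  ∃ (n : ℕ) (H : Fin (n + 1) → Subgroup G),
    (∀ i, (H i).Normal) ∧ Monotone H ∧ H 0 = ⊥ ∧ H (Fin.last n) = ⊤ ∧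
    ∀ i : Fin n, ∃ g ∈ H i.succ, H i.succ ≤ H i.castSucc ⊔ Subgroup.zpowers g

/-!
Let `α` be a real-valued irreducible character other than the principal one. Orthogonality gives
`∑ α = 0` and `∑ α² = |G|`. As `(∑ α)² - ∑ α²` is twice a sum of products of values of `α`, which
are algebraic integers, `2` divides `|G|` in the ring of algebraic integers, hence in `ℤ`.

If `ψ` is real-valued, as `χ * star χ` is, complex conjugation permutes its non-principal
irreducible constituents. If there is an odd number of them, one is fixed by conjugation, that is,
real-valued.
-/

theorem two_dvd_sq_sum_sub_sum_sq {ι R : Type*} [CommRing R] (s : Finset ι) (f : ι → R) :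
    2 ∣ (∑ i ∈ s, f i) ^ 2 - ∑ i ∈ s, f i ^ 2 := by
  induction s using Finset.induction_on with
  | empty => simp
  | insert i s hi ih =>
    rw [Finset.sum_insert hi, Finset.sum_insert hi]
    convert ih.add (dvd_mul_right 2 (f i * ∑ j ∈ s, f j)) using 1
    ring

theorem dvd_of_natCast_dvd_natCast_integralClosure {K : Type*} [Field K] [CharZero K] {m n : ℕ}
    (h : (m : integralClosure ℤ K) ∣ n) : m ∣ n := by
  obtain rfl | hm := eq_or_ne m 0
  · simpa using h
  obtain ⟨⟨q, hq⟩, hmq⟩ := h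
  have hmqK : (n : K) = m * q := by simpa using congrArg Subtype.val hmq
  have hq_rat : algebraMap ℚ K (n / m) = q := by simp [hmqK, hm]
  have hq_int : IsIntegral ℤ (n / m : ℚ) := by
    rwa [← isIntegral_algebraMap_iff (algebraMap ℚ K).injective, hq_rat]
  obtain ⟨z, hz⟩ := IsIntegrallyClosed.isIntegral_iff.1 hq_int
  have hz_mul : (n : ℚ) = m * z := by
    rw [eq_intCast] at hz
    rw [hz, mul_div_cancel₀ _ (Nat.cast_ne_zero.2 hm)]
  exact Int.natCast_dvd_natCast.1 ⟨z, mod_cast hz_mul⟩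

theorem isIntegral_of_mem_spectrum {R K A : Type*} [CommRing R] [Field K] [Ring A] [Algebra R K]
    [Algebra K A] [Algebra R A] [IsScalarTower R K A] {a : A} (ha : IsIntegral R a) {μ : K}
    (hμ : μ ∈ spectrum K a) : IsIntegral R μ := by
  obtain hA | hA := subsingleton_or_nontrivial A
  · simp [spectrum.of_subsingleton] at hμ
  obtain ⟨p, hp, hpa⟩ := ha
  refine ⟨p, hp, ?_⟩
  rw [← Polynomial.aeval_def] at hpa
  have hpμ : (p.map (algebraMap R K)).eval μ ∈
      spectrum K (Polynomial.aeval a (p.map (algebraMap R K))) :=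
    spectrum.subset_polynomial_aeval a _ ⟨μ, hμ, rfl⟩
  rwa [Polynomial.aeval_map_algebraMap, hpa, spectrum.zero_eq, Set.mem_singleton_iff,
    Polynomial.eval_map] at hpμ

theorem exists_mem_isFixedPt_of_odd_ncard {X : Type*} {σ : X → X}
    (hσ : Function.Involutive σ) {s : Set X} (hs : Set.MapsTo σ s s) (hodd : Odd s.ncard) :
    ∃ x ∈ s, Function.IsFixedPt σ x := by
  have : Fintype s := (Set.finite_of_ncard_pos hodd.pos).fintype
  have hinv : Function.Involutive (hs.restrict σ s s) := fun x => Subtype.ext (hσ x)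
  have hcard : ¬2 ∣ Fintype.card s := by
    rw [← Nat.card_eq_fintype_card, Nat.card_coe_set_eq]
    exact hodd.not_two_dvd_nat
  have hsq : hinv.toPerm ^ 2 ^ 1 = 1 := Equiv.ext fun x => hinv x
  obtain ⟨x, hx⟩ := Equiv.Perm.exists_fixed_point_of_prime hcard hsq
  exact ⟨x, x.2, congrArg Subtype.val hx⟩

section MatrixTrace

open Matrix

variable {ι : Type*} [Fintype ι] [DecidableEq ι]

theorem isIntegral_matrix_trace {R K : Type*} [CommRing R] [Field K] [IsAlgClosed K] [Algebra R K]
    {A : Matrix ι ι K} (hA : IsIntegral R A) : IsIntegral R A.trace := by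
  rw [Matrix.trace_eq_sum_roots_charpoly]
  refine IsIntegral.multiset_sum fun μ hμ => isIntegral_of_mem_spectrum hA ?_
  exact mem_spectrum_of_isRoot_charpoly (Polynomial.isRoot_of_mem_roots hμ)

variable {G 𝕜 : Type*} [Group G] [RCLike 𝕜] (M : G →* Matrix ι ι 𝕜)

/-- The Gram matrix of the `G`-invariant Hermitian form obtained by summing the translates of the
standard one along the matrix representation `M`. -/
def invariantGram [Fintype G] : Matrix ι ι 𝕜 :=
  ∑ g, (M g)ᴴ * M g

open ComplexOrder in
theorem posDef_invariantGram [Fintype G] : (invariantGram M).PosDef := by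
  rw [invariantGram, ← Finset.add_sum_erase _ _ (Finset.mem_univ 1)]
  refine PosDef.add_posSemidef (by simpa using PosDef.one) ?_
  exact posSemidef_sum _ fun g _ => posSemidef_conjTranspose_mul_self (M g)

theorem conjTranspose_mul_invariantGram_mul [Fintype G] (g : G) :
    (M g)ᴴ * invariantGram M * M g = invariantGram M := by
  rw [invariantGram, Finset.mul_sum, Finset.sum_mul]
  refine Fintype.sum_equiv (Equiv.mulRight g) _ _ fun x => ?_
  simp [conjTranspose_mul, Matrix.mul_assoc]

theorem conjTranspose_mul_invariantGram [Fintype G] (g : G) :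
    (M g)ᴴ * invariantGram M = invariantGram M * M g⁻¹ := by
  have hg : M g * M g⁻¹ = 1 := by rw [← map_mul, mul_inv_cancel, map_one]
  conv_rhs => rw [← conjTranspose_mul_invariantGram_mul M g]
  rw [Matrix.mul_assoc _ (M g), hg, mul_one]

open ComplexOrder in
theorem star_trace_eq_trace_inv [Finite G] (g : G) : star (M g).trace = (M g⁻¹).trace := by
  have := Fintype.ofFinite G
  have hdet : IsUnit (invariantGram M).det :=
    (isUnit_iff_isUnit_det _).1 (posDef_invariantGram M).isUnit
  calc star (M g).trace
      = ((M g)ᴴ * invariantGram M * (invariantGram M)⁻¹).trace := by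
        rw [mul_nonsing_inv_cancel_right _ _ hdet, trace_conjTranspose]
    _ = (M g⁻¹).trace := by
        rw [conjTranspose_mul_invariantGram, trace_mul_comm, nonsing_inv_mul_cancel_left _ _ hdet]

end MatrixTrace

section Representation

variable {G V : Type*} [AddCommGroup V]

theorem exists_matrix_trace_eq_character {K : Type*} [Monoid G] [Field K] [Module K V]
    [FiniteDimensional K V] (ρ : Representation K G V) :
    ∃ (n : ℕ) (M : G →* Matrix (Fin n) (Fin n) K), ∀ g, ρ.character g = (M g).trace :=
  let b := Module.finBasis K V
  ⟨_, (LinearMap.toMatrixAlgEquiv b).toAlgHom.toMonoidHom.comp ρ,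
    fun g => LinearMap.trace_eq_matrix_trace K b (ρ g)⟩

theorem isIntegral_character_of_isOfFinOrder {K : Type*} [Monoid G] [Field K] [IsAlgClosed K]
    [Module K V] [FiniteDimensional K V] (ρ : Representation K G V) {g : G}
    (hg : IsOfFinOrder g) : IsIntegral ℤ (ρ.character g) := by
  obtain ⟨n, M, hM⟩ := exists_matrix_trace_eq_character ρ
  rw [hM]
  refine isIntegral_matrix_trace (IsIntegral.of_pow hg.orderOf_pos ?_)
  rw [← map_pow, pow_orderOf_eq_one, map_one]
  exact isIntegral_one

theorem star_character_eq_character_inv {𝕜 : Type*} [Group G] [Finite G] [RCLike 𝕜] [Module 𝕜 V]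
    [FiniteDimensional 𝕜 V] (ρ : Representation 𝕜 G V) (g : G) :
    star (ρ.character g) = ρ.character g⁻¹ := by
  obtain ⟨n, M, hM⟩ := exists_matrix_trace_eq_character ρ
  rw [hM, hM, star_trace_eq_trace_inv]

end Representation

section IrreducibleCharacters

variable {G : Type} [Group G] [Fintype G] {α β ψ : G → ℂ}

theorem star_charInner (φ ψ : G → ℂ) : star (charInner G φ ψ) = charInner G (star φ) (star ψ) := by
  simp [charInner]

namespace IsIrrChar

theorem isIntegral_apply (hα : IsIrrChar G α) (g : G) : IsIntegral ℤ (α g) := by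
  obtain ⟨V, -, rfl⟩ := hα
  exact isIntegral_character_of_isOfFinOrder V.ρ (isOfFinOrder_of_finite g)

theorem star_apply (hα : IsIrrChar G α) (g : G) : star (α g) = α g⁻¹ := by
  obtain ⟨V, -, rfl⟩ := hα
  exact star_character_eq_character_inv V.ρ g

theorem one : IsIrrChar G 1 := by
  have hchar : (FDRep.of (Representation.trivial ℂ G ℂ)).character = 1 := by
    ext g
    exact (LinearMap.trace_id ℂ ℂ).trans (by simp)
  refine ⟨_, ?_, hchar⟩
  rw [FDRep.simple_iff_char_is_norm_one]
  simp [hchar]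

theorem star (hα : IsIrrChar G α) : IsIrrChar G (star α) := by
  have hstar := hα.star_apply
  obtain ⟨V, hV, rfl⟩ := hα
  refine ⟨FDRep.of (Representation.dual V.ρ), ?_, ?_⟩
  · rw [FDRep.simple_iff_char_is_norm_one] at hV ⊢
    rw [← hV]
    simp only [FDRep.char_dual, inv_inv, mul_comm]
  · ext g
    rw [FDRep.char_dual, Pi.star_apply, hstar]

theorem charInner_eq_inv_card_mul_sum_inv (hβ : IsIrrChar G β) (φ : G → ℂ) :
    charInner G φ β = (Nat.card G : ℂ)⁻¹ * ∑ g, φ g * β g⁻¹ := by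
  simp only [charInner, Nat.card_eq_fintype_card, starRingEnd_apply, hβ.star_apply]

theorem charInner_self (hα : IsIrrChar G α) : charInner G α α = 1 := by
  rw [hα.charInner_eq_inv_card_mul_sum_inv α]
  obtain ⟨V, hV, rfl⟩ := hα
  rw [(FDRep.simple_iff_char_is_norm_one V).1 hV, inv_mul_cancel₀ (NeZero.ne _)]

theorem charInner_eq_zero_of_ne (hα : IsIrrChar G α) (hβ : IsIrrChar G β) (hne : α ≠ β) :
    charInner G α β = 0 := by
  rw [hβ.charInner_eq_inv_card_mul_sum_inv α]
  obtain ⟨V, hV, rfl⟩ := hα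
  obtain ⟨W, hW, rfl⟩ := hβ
  have := invertibleOfNonzero (NeZero.ne (Nat.card G : ℂ))
  rw [FDRep.char_orthonormal V W, if_neg fun ⟨i⟩ => hne (FDRep.char_iso i)]

theorem even_card_of_star_eq_self (hα : IsIrrChar G α) (hne : α ≠ 1) (hreal : Star.star α = α) :
    Even (Fintype.card G) := by
  have hcard : (Fintype.card G : ℂ) ≠ 0 := Nat.cast_ne_zero.2 Fintype.card_ne_zero
  have hsum : ∑ g, α g = 0 := by
    simpa [charInner, hcard] using hα.charInner_eq_zero_of_ne one hne
  have hsum_sq : ∑ g, α g ^ 2 = Fintype.card G := by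
    have hconj (g : G) : starRingEnd ℂ (α g) = α g := congrFun hreal g
    have := hα.charInner_self
    simp only [charInner, hconj, ← pow_two] at this
    rwa [inv_mul_eq_one₀ hcard, eq_comm] at this
  let a (g : G) : integralClosure ℤ ℂ := ⟨α g, hα.isIntegral_apply g⟩
  have ha : (∑ g, a g) ^ 2 - ∑ g, a g ^ 2 = -(Fintype.card G : integralClosure ℤ ℂ) := by
    ext
    simp [a, hsum, hsum_sq]
  have htwo := two_dvd_sq_sum_sub_sum_sq Finset.univ a
  rw [ha, dvd_neg] at htwo
  exact even_iff_two_dvd.2 (dvd_of_natCast_dvd_natCast_integralClosure (mod_cast htwo))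

end IsIrrChar

/-- The non-principal irreducible characters occurring in `ψ`, where a character `α` counts as
occurring in an arbitrary function `ψ` if their inner product is nonzero. -/
def nonprincipalConstituents (ψ : G → ℂ) : Set (G → ℂ) :=
  {α | IsIrrChar G α ∧ α ≠ 1 ∧ charInner G ψ α ≠ 0}

theorem mapsTo_star_nonprincipalConstituents (hψ : star ψ = ψ) :
    Set.MapsTo star (nonprincipalConstituents ψ) (nonprincipalConstituents ψ) := by
  rintro α ⟨hirr, hne, hinner⟩
  refine ⟨hirr.star, fun h => hne ?_, ?_⟩
  · rw [← star_star α, h, star_one]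
  · rw [← hψ, ← star_charInner]
    exact star_ne_zero.2 hinner

theorem even_card_of_odd_eta_general (hψ : star ψ = ψ)
    (hodd : Odd (nonprincipalConstituents ψ).ncard) : Even (Fintype.card G) := by
  obtain ⟨α, ⟨hirr, hne, -⟩, hreal⟩ := exists_mem_isFixedPt_of_odd_ncard
    star_involutive (mapsTo_star_nonprincipalConstituents hψ) hodd
  exact hirr.even_card_of_star_eq_self hne hreal

end IrreducibleCharacters

/-- If `χ` is faithful with `χ(1) > 1` and `η(χ)` is odd, then `|G|` is even. -/
theorem even_card_of_odd_eta (G : Type) [Group G] [Fintype G] (χ : G → ℂ)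
    (hχ : IsIrrChar G χ) (hfaithful : ∀ g : G, χ g = χ 1 → g = 1)
    (hdeg : 1 < (χ 1).re) (hodd : Odd (etaChar G χ)) :
    Even (Fintype.card G) :=
  even_card_of_odd_eta_general (IsSelfAdjoint.mul_star_self χ) hodd
end

section
/- Let G be a finite group, χ ∈ Irr(G), and let α_1, …, α_n be the distinct non-principal irreducible constituents of χ·conj(χ). Let N be a normal subgroup of G. Then the restriction χ_N is irreducible if and only if N is not contained in Ker(α_i) for any i = 1, …, n. -/
open scoped Classical BigOperators

/-!
Let `V` afford `χ`. Then `χ ⬝ conj χ` is the character of `E = Hom(V, V)`, and by Schur's lemma and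
complete reducibility `χ_N` is irreducible iff the `N`-invariants `E^N` are one-dimensional, that
is, iff `E^N` is no larger than the line `E^G`. As `N` is normal, `E^N` is a `G`-subrepresentation
of `E`, and its irreducible constituents are those of `E` whose kernel contains `N`. So
`E^N ≤ E^G` says exactly that the only such constituent is the principal character.
-/

open Module Representation

section FieldCoefficients

variable {k G V W : Type*} [Field k]

theorem isSimpleModule_of_finrank_end_eq_one {A M : Type*} [Ring A] [Algebra k A]
    [AddCommGroup M] [Module k M] [Module A M] [IsScalarTower k A M] [IsSemisimpleModule A M]
    (h : finrank k (End A M) = 1) : IsSimpleModule A M := by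
  have hid : (1 : End A M) ≠ 0 := by
    intro h0
    have := subsingleton_of_zero_eq_one h0.symm
    simp [finrank_zero_of_subsingleton] at h
  have : Nontrivial M := by
    by_contra hM
    rw [not_nontrivial_iff_subsingleton] at hM
    exact hid (Subsingleton.elim _ _)
  refine (isSimpleModule_iff A M).2 ⟨fun p => or_iff_not_imp_left.2 fun hp => ?_⟩
  obtain ⟨q, hpq⟩ := exists_isCompl p
  obtain ⟨x, hxp, hx⟩ := p.exists_mem_ne_zero_of_ne_bot hp
  obtain ⟨c, hc⟩ :=
    (finrank_eq_one_iff_of_nonzero' (1 : End A M) hid).1 h (p.projection q hpq)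
  have projection_eq_smul (y : M) : p.projection q hpq y = c • y :=
    (LinearMap.congr_fun hc y).symm
  have hc1 : c = 1 := by
    refine smul_left_injective k hx ?_
    simp only [one_smul, ← projection_eq_smul, Submodule.projection_apply_of_mem_left hpq hxp]
  refine (Submodule.eq_top_iff' (p := p)).2 fun y => ?_
  simpa [projection_eq_smul, hc1] using Submodule.projection_apply_mem hpq y

variable [AddCommGroup V] [Module k V] [AddCommGroup W] [Module k W]

section Monoid

variable [Monoid G] {ρ : Representation k G V}

/-- The order isomorphism between the subrepresentations of a subrepresentation `S` and the
subrepresentations contained in `S`: image and preimage under the inclusion of `S`. It identifies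
the irreducible subrepresentations with the atoms of the lattice of subrepresentations. -/
def subrepresentationOrderIsoIic (S : Subrepresentation ρ) :
    Subrepresentation S.toRepresentation ≃o Set.Iic S where
  toFun T :=
    ⟨{ toSubmodule := T.toSubmodule.map S.toSubmodule.subtype
       apply_mem_toSubmodule := by
        rintro g _ ⟨x, hx, rfl⟩
        exact ⟨_, T.apply_mem_toSubmodule g hx, rfl⟩ },
      Submodule.map_subtype_le _ _⟩
  invFun T :=
    { toSubmodule := T.1.toSubmodule.comap S.toSubmodule.subtype
      apply_mem_toSubmodule := fun g _ hv => T.1.apply_mem_toSubmodule g hv }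
  left_inv T := Subrepresentation.toSubmodule_injective <|
    Submodule.comap_map_eq_of_injective S.toSubmodule.injective_subtype _
  right_inv T := Subtype.ext <| Subrepresentation.toSubmodule_injective <|
    Submodule.map_comap_eq_self <| S.toSubmodule.range_subtype.symm ▸ T.2
  map_rel_iff' := Submodule.map_le_map_iff_of_injective S.toSubmodule.injective_subtype _ _

theorem isIrreducible_toRepresentation_iff_isAtom {S : Subrepresentation ρ} :
    S.toRepresentation.IsIrreducible ↔ IsAtom S :=
  (subrepresentationOrderIsoIic S).isSimpleOrder_iff.trans Set.isSimpleOrder_Iic_iff_isAtom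

theorem subrepresentation_le_of_forall_isIrreducible [IsSemisimpleRepresentation ρ]
    {S T : Subrepresentation ρ}
    (h : ∀ U : Subrepresentation ρ, U.toRepresentation.IsIrreducible → U ≤ S → U ≤ T) : S ≤ T := by
  have := (isSemisimpleRepresentation_iff_isSemisimpleModule_asModule ρ).1 ‹_›
  let e := Subrepresentation.subrepresentationSubmoduleOrderIso (ρ := ρ)
  rw [← e.le_iff_le, le_iff_atom_le_imp, e.surjective.forall]
  simp only [e.isAtom_iff, e.le_iff_le, ← isIrreducible_toRepresentation_iff_isAtom]
  exact h

theorem finrank_eq_one_of_isIrreducible_of_isTrivial (ρ : Representation k G V)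
    [ρ.IsIrreducible] [ρ.IsTrivial] : finrank k V = 1 := by
  rw [← isSimpleModule_iff_finrank_eq_one, isSimpleModule_iff]
  let e : Submodule k V ≃o Subrepresentation ρ :=
    { toFun p := ⟨p, fun g v hv => by rwa [ρ.isTrivial_apply]⟩
      invFun := Subrepresentation.toSubmodule
      left_inv _ := rfl
      right_inv _ := rfl
      map_rel_iff' := Iff.rfl }
  exact e.isSimpleOrder

end Monoid

section Group

variable [Group G] {ρ : Representation k G V} {σ : Representation k G W} {N : Subgroup G}

theorem isTrivial_iff_invariants_eq_top : ρ.IsTrivial ↔ ρ.invariants = ⊤ :=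
  ⟨fun _ => ρ.invariants_eq_top, fun h => ⟨fun g => LinearMap.ext fun v =>
    (h ▸ Submodule.mem_top : v ∈ ρ.invariants) g⟩⟩

theorem isTrivial_toRepresentation_iff {S : Subrepresentation ρ} :
    S.toRepresentation.IsTrivial ↔ S.toSubmodule ≤ ρ.invariants :=
  ⟨fun _ v hv g => congrArg Subtype.val (S.toRepresentation.isTrivial_apply g ⟨v, hv⟩),
   fun h => ⟨fun g => LinearMap.ext fun v => Subtype.ext (h v.2 g)⟩⟩

theorem isTrivial_of_injective_of_invariants_comp_le (f : σ.IntertwiningMap ρ)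
    (hf : Function.Injective f) (hρ : invariants (ρ.comp N.subtype) ≤ ρ.invariants)
    [IsTrivial (σ.comp N.subtype)] : σ.IsTrivial := by
  refine ⟨fun g => LinearMap.ext fun w => hf ?_⟩
  have hfw : f w ∈ invariants (ρ.comp N.subtype) := fun n => by
    change ρ n (f w) = f w
    rw [← f.isIntertwining]
    exact congrArg f (isTrivial_apply (σ.comp N.subtype) n w)
  rw [f.isIntertwining]
  exact hρ hfw g

theorem invariants_comp_le_of_forall_isIrreducible [N.Normal] [IsSemisimpleRepresentation ρ]
    (h : ∀ S : Subrepresentation ρ, S.toRepresentation.IsIrreducible →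
      IsTrivial (S.toRepresentation.comp N.subtype) → S.toRepresentation.IsTrivial) :
    invariants (ρ.comp N.subtype) ≤ ρ.invariants := by
  let invariantsN : Subrepresentation ρ :=
    ⟨invariants (ρ.comp N.subtype), ρ.le_comap_invariants N⟩
  let invariantsG : Subrepresentation ρ :=
    ⟨ρ.invariants, fun g v hv => by rwa [hv g]⟩
  suffices invariantsN ≤ invariantsG from this
  refine subrepresentation_le_of_forall_isIrreducible fun S hS hSN => ?_
  refine isTrivial_toRepresentation_iff.1 (h S hS ⟨fun n => ?_⟩)
  exact LinearMap.ext fun v => Subtype.ext (hSN v.2 n)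

theorem isIrreducible_iff_finrank_invariants_linHom_eq_one [Finite G] [NeZero (Nat.card G : k)]
    [IsAlgClosed k] [FiniteDimensional k V] (ρ : Representation k G V) :
    ρ.IsIrreducible ↔ finrank k (linHom ρ ρ).invariants = 1 := by
  rw [(invariantsEquivIntertwiningMap ρ ρ).finrank_eq]
  refine ⟨fun _ => IsIrreducible.finrank_intertwiningMap_self ρ, fun h => ?_⟩
  rw [(IntertwiningMap.equivLinearMapAsModule ρ ρ).finrank_eq] at h
  exact (irreducible_iff_isSimpleModule_asModule ρ).2 (isSimpleModule_of_finrank_end_eq_one h)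

theorem isIrreducible_comp_iff_invariants_linHom_comp_le [Finite G] [NeZero (Nat.card G : k)]
    [IsAlgClosed k] [FiniteDimensional k V] (ρ : Representation k G V) [ρ.IsIrreducible]
    (N : Subgroup G) :
    IsIrreducible (ρ.comp N.subtype) ↔
      invariants ((linHom ρ ρ).comp N.subtype) ≤ (linHom ρ ρ).invariants := by
  have hG := (isIrreducible_iff_finrank_invariants_linHom_eq_one ρ).1 ‹_›
  have : NeZero (Nat.card N : k) := ⟨fun h => NeZero.ne (Nat.card G : k) <| by
    obtain ⟨m, hm⟩ := N.card_subgroup_dvd_card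
    rw [hm, Nat.cast_mul, h, zero_mul]⟩
  have hle : (linHom ρ ρ).invariants ≤ invariants ((linHom ρ ρ).comp N.subtype) :=
    fun v hv n => hv n
  rw [isIrreducible_iff_finrank_invariants_linHom_eq_one]
  change finrank k (invariants ((linHom ρ ρ).comp N.subtype)) = 1 ↔ _
  exact ⟨fun hN => (Submodule.eq_of_le_of_finrank_eq hle (hG.trans hN.symm)).ge,
    fun h => h.antisymm hle ▸ hG⟩

theorem isTrivial_iff_forall_character_eq_finrank [Finite G] [CharZero k] [FiniteDimensional k V]
    (ρ : Representation k G V) : ρ.IsTrivial ↔ ∀ g, ρ.character g = finrank k V := by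
  refine ⟨fun _ g => by simp [Representation.character], fun h => ?_⟩
  have := Fintype.ofFinite G
  have := invertibleOfNonzero (NeZero.ne (Nat.card G : k))
  have hdim := card_inv_mul_sum_char_eq_finrank ρ
  simp only [h, Finset.sum_const, Finset.card_univ, nsmul_eq_mul] at hdim
  rw [← Nat.card_eq_fintype_card, inv_mul_cancel_left₀ (NeZero.ne _), Nat.cast_inj] at hdim
  exact isTrivial_iff_invariants_eq_top.2 (Submodule.eq_top_of_finrank_eq hdim.symm)

theorem character_eq_one_iff_isTrivial [Finite G] [CharZero k] [FiniteDimensional k V]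
    (ρ : Representation k G V) [ρ.IsIrreducible] :
    ρ.character = (fun _ => 1) ↔ ρ.IsTrivial := by
  constructor
  · intro h
    rw [isTrivial_iff_forall_character_eq_finrank, ← ρ.char_one, h]
    exact fun _ => rfl
  · intro hρ
    ext g
    rw [(isTrivial_iff_forall_character_eq_finrank ρ).1 hρ,
      finrank_eq_one_of_isIrreducible_of_isTrivial ρ, Nat.cast_one]

end Group

end FieldCoefficients

section UnitaryTrick

variable {G 𝕜 n V : Type*} [Group G] [Finite G] [RCLike 𝕜]

open scoped ComplexOrder Matrix in
theorem exists_posDef_conjTranspose_mul_mul_eq [Fintype n] [DecidableEq n] (M : G →* Matrix n n 𝕜) :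
    ∃ P : Matrix n n 𝕜, P.PosDef ∧ ∀ g, (M g)ᴴ * P * M g = P := by
  have := Fintype.ofFinite G
  refine ⟨∑ h, (M h)ᴴ * M h, ?_, fun g => ?_⟩
  · rw [← Finset.add_sum_erase _ _ (Finset.mem_univ 1)]
    refine Matrix.PosDef.add_posSemidef ?_ <|
      Matrix.posSemidef_sum _ fun h _ => Matrix.posSemidef_conjTranspose_mul_self (M h)
    simpa using Matrix.PosDef.one
  · simp only [Finset.mul_sum, Finset.sum_mul]
    refine Fintype.sum_equiv (Equiv.mulRight g) _ _ fun h => ?_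
    simp [Matrix.mul_assoc]

open scoped ComplexOrder Matrix in
theorem trace_map_inv_eq_star_trace [Fintype n] [DecidableEq n] (M : G →* Matrix n n 𝕜) (g : G) :
    (M g⁻¹).trace = star (M g).trace := by
  obtain ⟨P, hP, hMP⟩ := exists_posDef_conjTranspose_mul_mul_eq M
  have hconj : P * M g⁻¹ * P⁻¹ = (M g)ᴴ := calc
    P * M g⁻¹ * P⁻¹ = (M g)ᴴ * P * (M g * M g⁻¹) * P⁻¹ := by
      rw [← Matrix.mul_assoc _ (M g), hMP]
    _ = (M g)ᴴ := by
      rw [← map_mul, mul_inv_cancel, map_one, Matrix.mul_one, Matrix.mul_assoc,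
        Matrix.mul_nonsing_inv P ((Matrix.isUnit_iff_isUnit_det P).1 hP.isUnit), Matrix.mul_one]
  rw [← Matrix.trace_conjTranspose, ← hconj, Matrix.trace_conj hP.isUnit]

variable [AddCommGroup V] [Module 𝕜 V] [FiniteDimensional 𝕜 V] (ρ : Representation 𝕜 G V)

theorem character_inv (g : G) : ρ.character g⁻¹ = starRingEnd 𝕜 (ρ.character g) := by
  let b := finBasis 𝕜 V
  let M : G →* Matrix _ _ 𝕜 := (LinearMap.toMatrixAlgEquiv b).toMulEquiv.toMonoidHom.comp ρ
  simpa [M, Representation.character, LinearMap.trace_eq_matrix_trace 𝕜 b] using!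
    trace_map_inv_eq_star_trace M g

theorem character_mul_conj_character :
    (fun g => ρ.character g * starRingEnd 𝕜 (ρ.character g)) = (linHom ρ ρ).character := by
  ext g
  rw [char_linHom, character_inv, mul_comm]

end UnitaryTrick

section ComplexCharacters

variable {G V W : Type} [Group G] [AddCommGroup V] [Module ℂ V] [FiniteDimensional ℂ V]
  [AddCommGroup W] [Module ℂ W] [FiniteDimensional ℂ W]
  (ρ : Representation ℂ G V) (σ : Representation ℂ G W)

theorem subset_charKer_character_iff [Finite G] (N : Subgroup G) :
    (N : Set G) ⊆ charKer G ρ.character ↔ IsTrivial (ρ.comp N.subtype) := by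
  rw [isTrivial_iff_forall_character_eq_finrank, ← ρ.char_one]
  exact ⟨fun h n => h n.2, fun h n hn => h ⟨n, hn⟩⟩

variable [Fintype G]

theorem charInner_character_eq_finrank_intertwiningMap :
    charInner G ρ.character σ.character = finrank ℂ (σ.IntertwiningMap ρ) := by
  have := invertibleOfNonzero (NeZero.ne (Nat.card G : ℂ))
  simp only [charInner, ← card_inv_mul_sum_char_mul_char_eq_finrank, character_inv,
    Nat.card_eq_fintype_card]

theorem charInner_character_ne_zero_iff :
    charInner G ρ.character σ.character ≠ 0 ↔ ∃ f : σ.IntertwiningMap ρ, f ≠ 0 := by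
  rw [charInner_character_eq_finrank_intertwiningMap, Nat.cast_ne_zero, ← Nat.pos_iff_ne_zero,
    finrank_pos_iff_exists_ne_zero]

theorem isIrrChar_character_iff : IsIrrChar G ρ.character ↔ ρ.IsIrreducible := by
  have := invertibleOfNonzero (NeZero.ne (Nat.card G : ℂ))
  have norm_one_iff : ∑ g, ρ.character g * ρ.character g⁻¹ = Nat.card G ↔ ρ.IsIrreducible := by
    rw [isIrreducible_iff_finrank_invariants_linHom_eq_one,
      (invariantsEquivIntertwiningMap ρ ρ).finrank_eq, ← Nat.cast_inj (R := ℂ),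
      ← card_inv_mul_sum_char_mul_char_eq_finrank, Nat.cast_one, inv_mul_eq_one₀ (NeZero.ne _),
      eq_comm]
  rw [← norm_one_iff]
  refine ⟨?_, fun h => ⟨FDRep.of ρ, (FDRep.simple_iff_char_is_norm_one _).2 h, rfl⟩⟩
  rintro ⟨U, hU, hUρ⟩
  rw [← hUρ]
  exact (FDRep.simple_iff_char_is_norm_one U).1 hU

theorem invariants_comp_le_iff_forall_isIrrChar (N : Subgroup G) [N.Normal] :
    invariants (ρ.comp N.subtype) ≤ ρ.invariants ↔
      ∀ β, IsIrrChar G β → charInner G ρ.character β ≠ 0 → (N : Set G) ⊆ charKer G β →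
        β = fun _ => 1 := by
  constructor
  · rintro hle _ ⟨U, hU, rfl⟩ hUρ hN
    have : IsIrreducible U.ρ := (isIrrChar_character_iff U.ρ).1 ⟨U, hU, rfl⟩
    have : IsTrivial (U.ρ.comp N.subtype) := (subset_charKer_character_iff U.ρ N).1 hN
    obtain ⟨f, hf⟩ := (charInner_character_ne_zero_iff ρ U.ρ).1 hUρ
    have hf_inj := (IsIrreducible.injective_or_eq_zero f).resolve_right hf
    exact (character_eq_one_iff_isTrivial U.ρ).2
      (isTrivial_of_injective_of_invariants_comp_le f hf_inj hle)
  · intro h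
    refine invariants_comp_le_of_forall_isIrreducible fun S hS hSN => ?_
    refine (character_eq_one_iff_isTrivial S.toRepresentation).1 (h _ ?_ ?_ ?_)
    · exact (isIrrChar_character_iff _).2 hS
    · refine (charInner_character_ne_zero_iff ρ _).2 ⟨⟨S.toSubmodule.subtype, fun _ => rfl⟩, ?_⟩
      have hS_ne_bot : S.toSubmodule ≠ ⊥ := fun hbot =>
        (isIrreducible_toRepresentation_iff_isAtom.1 hS).1
          (Subrepresentation.toSubmodule_injective hbot)
      obtain ⟨x, hxS, hx⟩ := S.toSubmodule.exists_mem_ne_zero_of_ne_bot hS_ne_bot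
      intro hzero
      have hx_eq_zero := DFunLike.congr_fun hzero (⟨x, hxS⟩ : S.toSubmodule)
      exact hx hx_eq_zero
    · exact (subset_charKer_character_iff _ N).2 hSN

end ComplexCharacters

/-- `χ_N` is irreducible iff `N` lies in no kernel of a non-principal irreducible
constituent of `χ ⬝ conj χ`. -/
theorem restriction_irreducible_iff (G : Type) [Group G] [Fintype G] (χ : G → ℂ)
    (hχ : IsIrrChar G χ) (n : ℕ) (α : Fin n → (G → ℂ)) (hinj : Function.Injective α)
    (hirr : ∀ i, IsIrrChar G (α i)) (hnp : ∀ i, α i ≠ fun _ => 1)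
    (hconst : ∀ i, charInner G (fun g => χ g * (starRingEnd ℂ) (χ g)) (α i) ≠ 0)
    (hall : ∀ β : G → ℂ, IsIrrChar G β → β ≠ (fun _ => 1) →
      charInner G (fun g => χ g * (starRingEnd ℂ) (χ g)) β ≠ 0 → ∃ i, β = α i)
    (N : Subgroup G) (hN : N.Normal) :
    IsIrrChar ↥N (fun x => χ x) ↔ ∀ i, ¬ ((N : Set G) ⊆ charKer G (α i)) := by
  obtain ⟨V, hV, rfl⟩ := hχ
  have hirrV : IsIrreducible V.ρ := (isIrrChar_character_iff V.ρ).1 ⟨V, hV, rfl⟩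
  have hcharE : (fun g => V.character g * starRingEnd ℂ (V.character g)) =
      (linHom V.ρ V.ρ).character := character_mul_conj_character V.ρ
  rw [hcharE] at hconst hall
  have hres : IsIrrChar N (fun x => V.character x) ↔ IsIrreducible (V.ρ.comp N.subtype) :=
    isIrrChar_character_iff (V.ρ.comp N.subtype)
  rw [hres, isIrreducible_comp_iff_invariants_linHom_comp_le V.ρ N,
    invariants_comp_le_iff_forall_isIrrChar]
  constructor
  · exact fun h i hi => hnp i (h (α i) (hirr i) (hconst i) hi)
  · intro h β hβ hβE hNβ
    by_contra hβ1
    obtain ⟨i, rfl⟩ := hall β hβ hβ1 hβE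
    exact h i hNβ
end

section
/- Let G be a finite group, χ ∈ Irr(G), N normal in G, and suppose some non-principal irreducible constituent α of χ·conj(χ) satisfies N ≤ Ker(α). Then [χ_N, χ_N] ≥ 1 + a·α(1) > 1, where a = [χ·conj(χ), α]; in particular χ_N is reducible. -/
open scoped Classical BigOperators

/-!
Let `ρ` afford `χ` and `τ` afford `α`, so that `End ρ` affords `χ ⬝ conj χ`. The evaluation map
`Hom_G(τ, End ρ) ⊗ τ → End ρ`, `f ⊗ v ↦ f v`, is injective: by Burnside's theorem the group algebra
acts on `τ` through every rank-one operator, and these isolate the coefficients of a tensor. Its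
range, of dimension `a·α(1)`, is fixed pointwise by every subgroup acting trivially on `τ`, and it
meets the line `End_G ρ` in zero because `τ` has no nonzero fixed vectors. Hence the fixed space of
such a subgroup on `End ρ`, whose dimension is `[χ_N, χ_N]`, has dimension at least `1 + a·α(1)`.
-/

open CategoryTheory Representation
open scoped MonoidAlgebra TensorProduct ComplexOrder Matrix

theorem trace_inv_of_conjTranspose_mul_mul_eq {R n : Type*} [CommRing R] [StarRing R] [Fintype n]
    [DecidableEq n] {A H : Matrix n n R} (hH : IsUnit H) (h : Aᴴ * H * A = H) :
    A⁻¹.trace = star A.trace := by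
  rw [Matrix.isUnit_iff_isUnit_det] at hH
  have hAinv : A⁻¹ = H⁻¹ * (Aᴴ * H) :=
    Matrix.inv_eq_left_inv (by rw [Matrix.mul_assoc, h, Matrix.nonsing_inv_mul _ hH])
  rw [hAinv, Matrix.trace_mul_comm, Matrix.mul_nonsing_inv_cancel_right _ _ hH,
    Matrix.trace_conjTranspose]

theorem exists_posDef_forall_conjTranspose_mul_mul_eq {𝕜 n G : Type*} [RCLike 𝕜] [Fintype n]
    [DecidableEq n] [Group G] [Finite G] (M : G →* Matrix n n 𝕜) :
    ∃ H : Matrix n n 𝕜, H.PosDef ∧ ∀ g, (M g)ᴴ * H * M g = H := by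
  have := Fintype.ofFinite G
  refine ⟨∑ x, (M x)ᴴ * M x, ?_, fun g ↦ ?_⟩
  · rw [← Finset.add_sum_erase _ _ (Finset.mem_univ (1 : G)), map_one, Matrix.conjTranspose_one,
      one_mul]
    exact Matrix.PosDef.one.add_posSemidef
      (Matrix.posSemidef_sum _ fun x _ ↦ Matrix.posSemidef_conjTranspose_mul_self (M x))
  · simp only [Finset.mul_sum, Finset.sum_mul]
    exact Fintype.sum_equiv (Equiv.mulRight g) _ _ fun x ↦ by simp [Matrix.mul_assoc]

theorem star_character {𝕜 G V : Type*} [RCLike 𝕜] [Group G] [Finite G] [AddCommGroup V]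
    [Module 𝕜 V] [FiniteDimensional 𝕜 V] (ρ : Representation 𝕜 G V) (g : G) :
    star (ρ.character g) = ρ.character g⁻¹ := by
  let b := Module.finBasis 𝕜 V
  let M : G →* Matrix _ _ 𝕜 := (LinearMap.toMatrixAlgEquiv b).toMulEquiv.toMonoidHom.comp ρ
  have hM (x : G) : ρ.character x = (M x).trace := LinearMap.trace_eq_matrix_trace 𝕜 b (ρ x)
  obtain ⟨H, hH, hinv⟩ := exists_posDef_forall_conjTranspose_mul_mul_eq M
  have hMinv : M g⁻¹ = (M g)⁻¹ :=
    (Matrix.inv_eq_left_inv (by rw [← map_mul, inv_mul_cancel, map_one])).symm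
  rw [hM, hM, hMinv, trace_inv_of_conjTranspose_mul_mul_eq hH.isUnit (hinv g)]

theorem character_mul_conj_eq_character_linHom {𝕜 G V : Type*} [RCLike 𝕜] [Group G] [Finite G]
    [AddCommGroup V] [Module 𝕜 V] [FiniteDimensional 𝕜 V] (ρ : Representation 𝕜 G V) :
    (fun g ↦ ρ.character g * (starRingEnd 𝕜) (ρ.character g)) = (linHom ρ ρ).character := by
  ext g
  rw [char_linHom, starRingEnd_apply, star_character, mul_comm]

theorem isIrreducible_of_simple {k G : Type*} [Field k] [Monoid G] (V : FDRep k G) [Simple V] :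
    IsIrreducible V.ρ := by
  have hbot_ne_top : (⊥ : Subrepresentation V.ρ) ≠ ⊤ := by
    intro h
    have hsub (v : V) : v = 0 := by
      have : v ∈ (⊤ : Subrepresentation V.ρ) := trivial
      rwa [← h] at this
    apply id_nonzero V
    ext v
    exact hsub v
  have : Nontrivial (Subrepresentation V.ρ) := ⟨⊥, ⊤, hbot_ne_top⟩
  refine ⟨fun p ↦ ?_⟩
  let ι : FDRep.of p.toRepresentation ⟶ V :=
    ⟨FGModuleCat.ofHom p.toSubmodule.subtype, fun g ↦ rfl⟩
  have : Mono ι := ConcreteCategory.mono_of_injective ι p.toSubmodule.subtype_injective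
  by_cases hι : ι = 0
  · left
    refine le_bot_iff.mp fun v hv ↦ ?_
    exact congr(($hι).hom.hom.hom (⟨v, hv⟩ : p.toSubmodule))
  · right
    have := isIso_of_mono_of_nonzero hι
    have hsurj := (ConcreteCategory.bijective_of_isIso ι).surjective
    refine top_le_iff.mp fun v _ ↦ ?_
    obtain ⟨w, rfl⟩ := hsurj v
    exact w.2

section Monoid

variable {k G V W : Type*} [Field k] [Monoid G] [AddCommGroup V] [Module k V]
  [AddCommGroup W] [Module k W]

theorem asAlgebraHom_surjective [IsAlgClosed k] [FiniteDimensional k V]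
    (ρ : Representation k G V) [ρ.IsIrreducible] : Function.Surjective ρ.asAlgebraHom := by
  intro φ
  have hscalar := (IsSimpleModule.algebraMap_end_bijective_of_isAlgClosed (A := k[G])
    (V := ρ.asModule) k).surjective
  let φ' : Module.End (Module.End k[G] ρ.asModule) ρ.asModule :=
    { toFun := φ
      map_add' := φ.map_add
      map_smul' := fun e v ↦ by
        obtain ⟨c, rfl⟩ := hscalar e
        exact φ.map_smul c v }
  let b := Module.finBasis k V
  obtain ⟨x, hx⟩ := jacobson_density φ' (Finset.univ.image b)
  exact ⟨x, b.ext fun i ↦ (hx _ (Finset.mem_image_of_mem b (Finset.mem_univ i))).symm⟩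

/-- The evaluation map `f ⊗ v ↦ f v` on `Hom_G(ρ, σ) ⊗ ρ`. Its range is the sum of the images of all
intertwining maps from `ρ` to `σ`; for irreducible `ρ` this is the `ρ`-isotypic part of `σ`. -/
noncomputable def intertwiningEval (ρ : Representation k G V) (σ : Representation k G W) :
    IntertwiningMap ρ σ ⊗[k] V →ₗ[k] W :=
  TensorProduct.lift (IntertwiningMap.toLinearMapl ρ σ)

variable {ρ : Representation k G V} {σ : Representation k G W}

@[simp]
theorem intertwiningEval_tmul (f : IntertwiningMap ρ σ) (v : V) :
    intertwiningEval ρ σ (f ⊗ₜ v) = f v := rfl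

theorem intertwiningEval_lTensor_asAlgebraHom (x : k[G]) (t : IntertwiningMap ρ σ ⊗[k] V) :
    intertwiningEval ρ σ ((ρ.asAlgebraHom x).lTensor _ t) =
      σ.asAlgebraHom x (intertwiningEval ρ σ t) := by
  induction t with
  | zero => simp
  | add s t hs ht => simp [hs, ht]
  | tmul f v => exact (IntertwiningMap.equivLinearMapAsModule ρ σ f).map_smul x v

theorem intertwiningEval_injective [IsAlgClosed k] [FiniteDimensional k V] [ρ.IsIrreducible] :
    Function.Injective (intertwiningEval ρ σ) := by
  rw [← LinearMap.ker_eq_bot, LinearMap.ker_eq_bot']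
  intro t ht
  let b := Module.finBasis k V
  obtain ⟨c, rfl⟩ := TensorProduct.eq_repr_basis_right b t
  suffices c = 0 by simp [this]
  ext i v
  obtain ⟨x, hx⟩ := asAlgebraHom_surjective ρ ((b.coord i).smulRight v)
  have hxt := intertwiningEval_lTensor_asAlgebraHom x (c.sum fun j f ↦ f ⊗ₜ b j)
  rw [ht, map_zero, hx] at hxt
  simpa [Finsupp.sum_fintype, Finsupp.single_apply, ite_smul, apply_ite] using hxt

end Monoid

section Group

variable {k G V W : Type*} [Field k] [Group G] [AddCommGroup V] [Module k V]
  [AddCommGroup W] [Module k W] {ρ : Representation k G V} {σ : Representation k G W}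

theorem isTrivial_of_forall_character_eq [Finite G] [CharZero k] [FiniteDimensional k V]
    (h : ∀ g, ρ.character g = ρ.character 1) : ρ.IsTrivial := by
  have := Fintype.ofFinite G
  have : Invertible (Nat.card G : k) := invertibleOfNonzero (NeZero.ne _)
  have hfinrank : Module.finrank k ρ.invariants = Module.finrank k V := by
    have := ρ.card_inv_mul_sum_char_eq_finrank
    simp only [h, char_one, Finset.sum_const, Finset.card_univ, Fintype.card_eq_nat_card,
      nsmul_eq_mul] at this
    rw [inv_mul_cancel_left₀ (NeZero.ne _)] at this
    exact_mod_cast this.symm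
  have htop : ρ.invariants = ⊤ := Submodule.eq_top_of_finrank_eq hfinrank
  exact ⟨fun g ↦ LinearMap.ext fun v ↦ (htop ▸ Submodule.mem_top : v ∈ ρ.invariants) g⟩

theorem invariants_eq_bot_of_character_ne_one [ρ.IsIrreducible] (h : ρ.character ≠ 1) :
    ρ.invariants = ⊥ := by
  by_contra hne
  obtain ⟨v, hv, hv0⟩ := Submodule.exists_mem_ne_zero_of_ne_bot hne
  let f : (trivial k G k).IntertwiningMap ρ :=
    ⟨LinearMap.toSpanSingleton k V v, fun g ↦ by ext; simp [hv g]⟩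
  have hf0 : f ≠ 0 := fun hf ↦ hv0 (by simpa [f] using congr($hf (1 : k)))
  have hinj : Function.Injective f := smul_left_injective k hv0
  have hsurj : Function.Surjective f := (IsIrreducible.surjective_or_eq_zero f).resolve_right hf0
  apply h
  rw [← char_iso (f.ofBijective ⟨hinj, hsurj⟩)]
  ext g
  simp [character]

theorem range_intertwiningEval_le_invariants (H : Subgroup G) [IsTrivial (ρ.comp H.subtype)] :
    LinearMap.range (intertwiningEval ρ σ) ≤ invariants (σ.comp H.subtype) := by
  rintro _ ⟨t, rfl⟩ h
  have hρ : ρ h = LinearMap.id := isTrivial_def (ρ.comp H.subtype) h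
  have := intertwiningEval_lTensor_asAlgebraHom (σ := σ) (ρ := ρ) (.single (h : G) 1) t
  simpa [hρ] using this.symm

theorem disjoint_invariants_range_intertwiningEval [Finite G] [NeZero (Nat.card G : k)]
    (h : ρ.invariants = ⊥) :
    Disjoint σ.invariants (LinearMap.range (intertwiningEval ρ σ)) := by
  have := Fintype.ofFinite G
  have : Invertible (Fintype.card G : k) :=
    invertibleOfNonzero (by simpa using NeZero.ne (Nat.card G : k))
  have hρ : ρ.averageMap = 0 := by
    ext v
    exact (Submodule.eq_bot_iff _).1 h _ (ρ.averageMap_invariant v)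
  rw [Submodule.disjoint_def]
  rintro _ hw ⟨t, rfl⟩
  rw [← σ.averageMap_id _ hw, averageMap, ← intertwiningEval_lTensor_asAlgebraHom,
    ← averageMap, hρ, LinearMap.lTensor_zero, LinearMap.zero_apply, map_zero]

theorem finrank_invariants_add_finrank_intertwiningMap_mul_le [Finite G]
    [NeZero (Nat.card G : k)] [IsAlgClosed k] [FiniteDimensional k V] [FiniteDimensional k W]
    [ρ.IsIrreducible] (hρ : ρ.invariants = ⊥) (H : Subgroup G) [IsTrivial (ρ.comp H.subtype)] :
    Module.finrank k σ.invariants + Module.finrank k (IntertwiningMap ρ σ) * Module.finrank k V ≤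
      Module.finrank k (invariants (σ.comp H.subtype)) := by
  have hle : σ.invariants ≤ invariants (σ.comp H.subtype) := fun w hw h ↦ hw h
  calc Module.finrank k σ.invariants + Module.finrank k (IntertwiningMap ρ σ) * Module.finrank k V
    _ = Module.finrank k σ.invariants +
        Module.finrank k (LinearMap.range (intertwiningEval ρ σ)) := by
      rw [LinearMap.finrank_range_of_inj intertwiningEval_injective,
        Module.finrank_tensorProduct]
    _ = Module.finrank k ↥(σ.invariants ⊔ LinearMap.range (intertwiningEval ρ σ)) := by
      rw [← Submodule.finrank_sup_add_finrank_inf_eq,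
        (disjoint_invariants_range_intertwiningEval hρ).eq_bot, finrank_bot, add_zero]
    _ ≤ _ := Submodule.finrank_mono (sup_le hle (range_intertwiningEval_le_invariants H))

end Group

section CharInner

variable {G : Type} [Group G] [Fintype G]

theorem charInner_character {V W : Type*} [AddCommGroup V] [Module ℂ V] [FiniteDimensional ℂ V]
    [AddCommGroup W] [Module ℂ W] [FiniteDimensional ℂ W] (σ : Representation ℂ G W)
    (ρ : Representation ℂ G V) :
    charInner G σ.character ρ.character = Module.finrank ℂ (IntertwiningMap ρ σ) := by
  have : Invertible (Nat.card G : ℂ) := invertibleOfNonzero (NeZero.ne _)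
  rw [← card_inv_mul_sum_char_mul_char_eq_finrank, charInner, Nat.card_eq_fintype_card]
  simp only [starRingEnd_apply, star_character]

theorem IsIrrChar.exists_isIrreducible {χ : G → ℂ} (hχ : IsIrrChar G χ) :
    ∃ (V : Type) (_ : AddCommGroup V) (_ : Module ℂ V) (_ : FiniteDimensional ℂ V)
      (ρ : Representation ℂ G V), ρ.IsIrreducible ∧ ρ.character = χ := by
  obtain ⟨V, _, hV⟩ := hχ
  exact ⟨V, _, _, inferInstance, V.ρ, isIrreducible_of_simple V, hV⟩

theorem IsIrrChar.charInner_self_s7 {χ : G → ℂ} (hχ : IsIrrChar G χ) : charInner G χ χ = 1 := by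
  obtain ⟨V, _, _, _, ρ, _, rfl⟩ := hχ.exists_isIrreducible
  rw [charInner_character, IsIrreducible.finrank_intertwiningMap_self, Nat.cast_one]

theorem charInner_restrict_self {V : Type*} [AddCommGroup V] [Module ℂ V] [FiniteDimensional ℂ V]
    (ρ : Representation ℂ G V) (H : Subgroup G) :
    charInner H (fun h ↦ ρ.character h) (fun h ↦ ρ.character h) =
      Module.finrank ℂ (invariants ((linHom ρ ρ).comp H.subtype)) := by
  let ρH : Representation ℂ H V := ρ.comp H.subtype
  calc charInner H ρH.character ρH.character
    _ = Module.finrank ℂ (IntertwiningMap ρH ρH) := charInner_character ρH ρH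
    _ = Module.finrank ℂ (invariants (linHom ρH ρH)) := by
      rw [(invariantsEquivIntertwiningMap ρH ρH).finrank_eq]

end CharInner

theorem restriction_reducible_of_kernel_general (G : Type) [Group G] [Fintype G] (χ : G → ℂ)
    (hχ : IsIrrChar G χ) (H : Subgroup G) (α : G → ℂ)
    (hα : IsIrrChar G α) (hnp : α ≠ fun _ => 1)
    (hconst : charInner G (fun g => χ g * (starRingEnd ℂ) (χ g)) α ≠ 0)
    (hker : (H : Set G) ⊆ charKer G α) :
    1 + (charInner G (fun g => χ g * (starRingEnd ℂ) (χ g)) α).re * (α 1).re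
        ≤ (charInner ↥H (fun x => χ x) (fun x => χ x)).re ∧
    1 < (charInner ↥H (fun x => χ x) (fun x => χ x)).re ∧
    ¬ IsIrrChar ↥H (fun x => χ x) := by
  obtain ⟨V, _, _, _, ρ, _, rfl⟩ := hχ.exists_isIrreducible
  obtain ⟨A, _, _, _, τ, _, rfl⟩ := hα.exists_isIrreducible
  rw [character_mul_conj_eq_character_linHom, charInner_character, Nat.cast_ne_zero] at hconst
  have : IsTrivial (τ.comp H.subtype) := isTrivial_of_forall_character_eq fun h ↦ hker h.2
  have hbound := finrank_invariants_add_finrank_intertwiningMap_mul_le (σ := linHom ρ ρ)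
    (invariants_eq_bot_of_character_ne_one hnp) H
  rw [(invariantsEquivIntertwiningMap ρ ρ).finrank_eq,
    IsIrreducible.finrank_intertwiningMap_self] at hbound
  have : Nontrivial A := IsSimpleModule.nontrivial ℂ[G] τ.asModule
  have hlt := (lt_add_of_pos_right 1 (Nat.mul_pos hconst.bot_lt Module.finrank_pos)).trans_le hbound
  have hnorm := charInner_restrict_self ρ H
  refine ⟨?_, ?_, fun hirr ↦ hlt.ne ?_⟩
  · rw [character_mul_conj_eq_character_linHom, charInner_character, hnorm, char_one]
    exact_mod_cast hbound
  · rw [hnorm]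
    exact_mod_cast hlt
  · exact_mod_cast hirr.charInner_self_s7.symm.trans hnorm

/-- If a non-principal irreducible constituent `α` of `χ ⬝ conj χ` has `N ≤ Ker α`,
then `[χ_N, χ_N] ≥ 1 + a·α(1) > 1` where `a = [χ ⬝ conj χ, α]`; in particular
`χ_N` is reducible. -/
theorem restriction_reducible_of_kernel (G : Type) [Group G] [Fintype G] (χ : G → ℂ)
    (hχ : IsIrrChar G χ) (N : Subgroup G) (hN : N.Normal) (α : G → ℂ)
    (hα : IsIrrChar G α) (hnp : α ≠ fun _ => 1)
    (hconst : charInner G (fun g => χ g * (starRingEnd ℂ) (χ g)) α ≠ 0)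
    (hker : (N : Set G) ⊆ charKer G α) :
    1 + (charInner G (fun g => χ g * (starRingEnd ℂ) (χ g)) α).re * (α 1).re
        ≤ (charInner ↥N (fun x => χ x) (fun x => χ x)).re ∧
    1 < (charInner ↥N (fun x => χ x) (fun x => χ x)).re ∧
    ¬ IsIrrChar ↥N (fun x => χ x) :=
  restriction_reducible_of_kernel_general G χ hχ N α hα hnp hconst hker
end
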